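/- arXiv:1701.04834 — 2 statements merged into one kernel-verified Lean document; each statement's English description precedes it below -/
import Mathlib

section
/- Let α ∈ {0, 1, 2}, let r > 0, and let f : ℝ → ℝ be three times continuously differentiable on a neighborhood of r. Then there exist constants C > 0 and δ > 0 such that for all h with 0 < h < δ, setting r₊ = r + h/2 and r₋ = r − h/2, one has | (f(r₊)·r₊^α − f(r₋)·r₋^α) / ((r₊^{α+1} − r₋^{α+1})/(α+1)) − ( (f(r₊) − f(r₋))/h + α·f(r)/r ) | ≤ C·h². (That is, the finite-volume divergence approximation of Method Two and the expanded-form approximation of Method One differ by O(h²).) -/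
/-!
Write `δ` and `μ` for the central difference and the mean over a cell of width `h`, and let `W` be
an antiderivative of the weight `w x = x ^ α`. Method Two is `δ(f w) / δW`, and the discrete
product rule `δ(f w) = μf δw + δf μw` splits it into a part approximating `f w' / w = α f / r` and
a part approximating `δf / h`. The stencils of `μ` and `δ` are symmetric, so `μ` and `δ / h` are
accurate to `O(h²)`; after clearing denominators, the numerator is `O(h⁴)` and the denominator is
of exact order `h²`.
-/

open Asymptotics Filter Topology
open scoped Nat

/-- The central difference `δ` of numerical analysis: the increment of `f` over the cell of
width `h` centered at `x`, not divided by `h`. -/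
noncomputable def centralDiff {E : Type*} [AddGroup E] (f : ℝ → E) (x h : ℝ) : E :=
  f (x + h / 2) - f (x - h / 2)

/-- The averaging operator `μ` of numerical analysis: the mean of the values of `f` at the two
faces of the cell of width `h` centered at `x`. -/
noncomputable def centralMean {E : Type*} [AddCommGroup E] [Module ℝ E] (f : ℝ → E) (x h : ℝ) : E :=
  (2⁻¹ : ℝ) • (f (x + h / 2) + f (x - h / 2))

lemma centralDiff_zero {E : Type*} [AddGroup E] (f : ℝ → E) (x : ℝ) : centralDiff f x 0 = 0 := by
  simp [centralDiff]

lemma centralDiff_mul (f g : ℝ → ℝ) (x h : ℝ) :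
    centralDiff (fun y ↦ f y * g y) x h =
      centralMean f x h * centralDiff g x h + centralDiff f x h * centralMean g x h := by
  simp only [centralDiff, centralMean, smul_eq_mul]
  ring

lemma isBigO_pow_comp_const_mul {E : Type*} [Norm E] {R : ℝ → E} {n : ℕ}
    (hR : R =O[𝓝 0] fun t ↦ t ^ n) (c : ℝ) :
    (fun h ↦ R (c * h)) =O[𝓝 0] fun h ↦ h ^ n := by
  have tendsto_zero : Tendsto (fun h : ℝ ↦ c * h) (𝓝 0) (𝓝 0) := by
    simpa using (continuous_const_mul c).tendsto 0
  refine (hR.comp_tendsto tendsto_zero).trans ?_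
  simpa only [Function.comp_def, mul_pow] using
    (isBigO_refl (fun h : ℝ ↦ h ^ n) (𝓝 0)).const_mul_left (c ^ n)

section Expansions

variable {E : Type*} [NormedAddCommGroup E] [NormedSpace ℝ E] {f : ℝ → E} {f' : E} {x : ℝ}

lemma hasDerivAt_centralDiff (hf : HasDerivAt f f' x) : HasDerivAt (centralDiff f x) f' 0 := by
  have right_face : HasDerivAt (fun h : ℝ ↦ x + h / 2) 2⁻¹ 0 := by
    simpa using ((hasDerivAt_id (0 : ℝ)).div_const 2).const_add x
  have left_face : HasDerivAt (fun h : ℝ ↦ x - h / 2) (-2⁻¹) 0 := by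
    simpa using ((hasDerivAt_id (0 : ℝ)).div_const 2).const_sub x
  convert! (HasDerivAt.scomp_of_eq 0 hf right_face (by simp)).sub
    (HasDerivAt.scomp_of_eq 0 hf left_face (by simp)) using 1
  module

lemma centralDiff_isBigO (hf : HasDerivAt f f' x) : centralDiff f x =O[𝓝 0] fun h ↦ h := by
  simpa [centralDiff_zero] using (hasDerivAt_centralDiff hf).isBigO_sub

lemma isBigO_centralDiff (hf : HasDerivAt f f' x) (hf' : f' ≠ 0) :
    (fun h ↦ h) =O[𝓝 0] centralDiff f x := by
  simpa [Function.comp_def, centralDiff_zero] using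
    ((hasDerivAt_centralDiff hf).isTheta_sub hf').isBigO_symm

lemma taylor_isBigO_of_contDiffAt {n : ℕ} (hf : ContDiffAt ℝ n f x) :
    (fun t ↦ f (x + t) - ∑ k ∈ Finset.range n, ((k ! : ℝ)⁻¹ * t ^ k) • iteratedDeriv k f x)
      =O[𝓝 0] fun t ↦ t ^ n := by
  obtain ⟨u, hu, hfu⟩ := hf.contDiffOn le_rfl (by simp)
  obtain ⟨ε, hε, hball⟩ := Metric.mem_nhds_iff.1 hu
  have hx : x ∈ Metric.ball x ε := Metric.mem_ball_self hε
  have remainder_at_x := taylor_isLittleO (convex_ball x ε) hx (hfu.mono hball)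
  rw [Metric.isOpen_ball.nhdsWithin_eq hx] at remainder_at_x
  have tendsto_x : Tendsto (fun t : ℝ ↦ x + t) (𝓝 0) (𝓝 x) := by
    simpa using (continuous_const_add x).tendsto 0
  have remainder : (fun t ↦ f (x + t) -
      ∑ k ∈ Finset.range (n + 1), ((k ! : ℝ)⁻¹ * t ^ k) • iteratedDeriv k f x)
        =O[𝓝 0] fun t ↦ t ^ n := by
    simpa [Function.comp_def, taylor_within_apply,
      iteratedDerivWithin_of_isOpen Metric.isOpen_ball hx]
      using (remainder_at_x.comp_tendsto tendsto_x).isBigO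
  have top_term : (fun t : ℝ ↦ ((n ! : ℝ)⁻¹ * t ^ n) • iteratedDeriv n f x)
      =O[𝓝 0] fun t ↦ t ^ n := by
    simpa using ((isBigO_refl (fun t : ℝ ↦ t ^ n) (𝓝 0)).const_mul_left (n ! : ℝ)⁻¹).smul
      (isBigO_const_const (iteratedDeriv n f x) (one_ne_zero (α := ℝ)) (𝓝 0))
  refine (remainder.add top_term).congr_left fun t ↦ ?_
  rw [Finset.sum_range_succ]
  abel

lemma centralMean_sub_isBigO (hf : ContDiffAt ℝ 2 f x) :
    (fun h ↦ centralMean f x h - f x) =O[𝓝 0] fun h ↦ h ^ 2 := by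
  have remainder := isBigO_pow_comp_const_mul (taylor_isBigO_of_contDiffAt hf)
  refine (((remainder 2⁻¹).add (remainder (-2⁻¹))).const_smul_left (2⁻¹ : ℝ)).congr_left fun h ↦ ?_
  simp only [centralMean, Finset.sum_range_succ, Finset.sum_range_zero, Nat.factorial,
    iteratedDeriv_zero, Pi.smul_apply, neg_mul, ← sub_eq_add_neg, ← div_eq_inv_mul]
  module

lemma centralDiff_sub_isBigO (hf : ContDiffAt ℝ 3 f x) (hf' : HasDerivAt f f' x) :
    (fun h ↦ centralDiff f x h - h • f') =O[𝓝 0] fun h ↦ h ^ 3 := by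
  have remainder := isBigO_pow_comp_const_mul (taylor_isBigO_of_contDiffAt hf)
  refine ((remainder 2⁻¹).sub (remainder (-2⁻¹))).congr_left fun h ↦ ?_
  simp only [centralDiff, Finset.sum_range_succ, Finset.sum_range_zero, Nat.factorial,
    iteratedDeriv_zero, iteratedDeriv_one, hf'.deriv, neg_mul, ← sub_eq_add_neg, ← div_eq_inv_mul]
  module

end Expansions

section WeightedDivergence

variable {f w W : ℝ → ℝ} {w' x : ℝ}

lemma mul_centralMean_sub_centralDiff_isBigO (hw : ContDiffAt ℝ 2 w x) (hW : ContDiffAt ℝ 3 W x)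
    (hWw : HasDerivAt W (w x) x) :
    (fun h ↦ h * centralMean w x h - centralDiff W x h) =O[𝓝 0] fun h ↦ h ^ 3 := by
  have mean := (isBigO_refl (fun h : ℝ ↦ h) (𝓝 0)).mul (centralMean_sub_isBigO hw)
  refine ((mean.congr_right fun h ↦ ?_).sub (centralDiff_sub_isBigO hW hWw)).congr_left fun h ↦ ?_
  · ring
  · rw [smul_eq_mul]
    ring

/-- The difference of the two discretizations of `(f w)' / w` over the common denominator
`δW · h · w`. -/
noncomputable def divergenceNumerator (f w W : ℝ → ℝ) (w' x h : ℝ) : ℝ :=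
  w x * h * centralDiff (fun y ↦ f y * w y) x h
    - centralDiff W x h * (w x * centralDiff f x h + h * (f x * w'))

lemma divergenceNumerator_isBigO (hf : ContDiffAt ℝ 2 f x) (hw : ContDiffAt ℝ 3 w x)
    (hw' : HasDerivAt w w' x) (hW : ContDiffAt ℝ 3 W x) (hWw : HasDerivAt W (w x) x) :
    divergenceNumerator f w W w' x =O[𝓝 0] fun h ↦ h ^ 4 := by
  have diff_f := centralDiff_isBigO (hf.differentiableAt (by norm_num)).hasDerivAt
  have trapezoid := mul_centralMean_sub_centralDiff_isBigO (hw.of_le (by norm_num)) hW hWw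
  have mean_f := (centralMean_sub_isBigO hf).mul (centralDiff_isBigO hw')
  have diff_w := (centralDiff_sub_isBigO hw hw').const_mul_left (f x * w x)
  have diff_W := (centralDiff_sub_isBigO hW hWw).const_mul_left (f x * w')
  have weight_part : (fun h ↦ w x * ((centralMean f x h - f x) * centralDiff w x h)
      + f x * w x * (centralDiff w x h - h • w') - f x * w' * (centralDiff W x h - h • w x))
        =O[𝓝 0] fun h ↦ h ^ 3 :=
    (((mean_f.const_mul_left (w x)).congr_right fun h ↦ (pow_succ h 2).symm).add diff_w).sub diff_W
  have diff_part : (fun h ↦ w x * (centralDiff f x h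
      * (h * centralMean w x h - centralDiff W x h))) =O[𝓝 0] fun h ↦ h * h ^ 3 :=
    (diff_f.mul trapezoid).const_mul_left (w x)
  refine (diff_part.add ((isBigO_refl (fun h : ℝ ↦ h) (𝓝 0)).mul weight_part)).congr
    (fun h ↦ ?_) fun h ↦ (pow_succ' h 3).symm
  rw [divergenceNumerator, centralDiff_mul]
  simp only [smul_eq_mul]
  ring

theorem centralDiff_mul_div_sub_isBigO (hf : ContDiffAt ℝ 2 f x) (hw : ContDiffAt ℝ 3 w x)
    (hw' : HasDerivAt w w' x) (hW : ContDiffAt ℝ 3 W x) (hWw : HasDerivAt W (w x) x)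
    (hwx : w x ≠ 0) :
    (fun h ↦ centralDiff (fun y ↦ f y * w y) x h / centralDiff W x h
      - (centralDiff f x h / h + f x * w' / w x)) =O[𝓝[≠] 0] fun h ↦ h ^ 2 := by
  have volume_lower := (isBigO_centralDiff hWw hwx).mono (nhdsWithin_le_nhds (s := {0}ᶜ))
  have volume_ne_zero : ∀ᶠ h in 𝓝[≠] 0, centralDiff W x h ≠ 0 := by
    filter_upwards [volume_lower.eq_zero_imp, self_mem_nhdsWithin] with h himp hh hzero
    exact hh (himp hzero)
  have numerator := (divergenceNumerator_isBigO hf hw hw' hW hWw).mono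
    (nhdsWithin_le_nhds (s := {0}ᶜ))
  have inv_volume := volume_lower.inv_rev <| by
    filter_upwards [self_mem_nhdsWithin] with h hh hzero using absurd hzero hh
  have inv_width := (isBigO_refl (fun h : ℝ ↦ h⁻¹) (𝓝[≠] 0)).const_mul_left (w x)⁻¹
  refine (numerator.mul (inv_volume.mul inv_width)).congr' ?_ ?_
  · filter_upwards [volume_ne_zero, self_mem_nhdsWithin] with h hV (hh : h ≠ 0)
    rw [divergenceNumerator]
    field_simp
  · filter_upwards [self_mem_nhdsWithin] with h (hh : h ≠ 0)
    field_simp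

end WeightedDivergence

lemma exists_forall_abs_le_of_isBigO_pow {g : ℝ → ℝ} {n : ℕ}
    (hg : g =O[𝓝[>] 0] fun h ↦ h ^ n) :
    ∃ C > 0, ∃ δ > 0, ∀ h, 0 < h → h < δ → |g h| ≤ C * h ^ n := by
  obtain ⟨C, hC, hbound⟩ := hg.exists_pos
  obtain ⟨δ, hδ, hIoo⟩ := (nhdsGT_basis (0 : ℝ)).mem_iff.1 hbound.bound
  refine ⟨C, hC, δ, hδ, fun h hpos hlt ↦ ?_⟩
  simpa [abs_of_pos hpos] using hIoo ⟨hpos, hlt⟩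

theorem stmt_0_general {α : ℝ} (hα : α ≠ -1) {r : ℝ} (hr : 0 < r) {f : ℝ → ℝ}
    (hf : ContDiffAt ℝ 2 f r) :
    ∃ C > (0 : ℝ), ∃ δ > (0 : ℝ), ∀ h : ℝ, 0 < h → h < δ →
      |(f (r + h / 2) * (r + h / 2) ^ α - f (r - h / 2) * (r - h / 2) ^ α) /
          (((r + h / 2) ^ (α + 1) - (r - h / 2) ^ (α + 1)) / (α + 1))
        - ((f (r + h / 2) - f (r - h / 2)) / h + α * f r / r)| ≤ C * h ^ 2 := by
  have hα' : α + 1 ≠ 0 := fun h ↦ hα (eq_neg_of_add_eq_zero_left h)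
  have smooth (p : ℝ) : ContDiffAt ℝ 3 (fun y : ℝ ↦ y ^ p) r :=
    Real.contDiffAt_rpow_const_of_ne hr.ne'
  have volume_deriv : HasDerivAt (fun y : ℝ ↦ y ^ (α + 1) / (α + 1)) (r ^ α) r := by
    simpa [hα'] using
      (Real.hasDerivAt_rpow_const (p := α + 1) (Or.inl hr.ne')).div_const (α + 1)
  have source_term : f r * (α * r ^ (α - 1)) / r ^ α = α * f r / r := by
    rw [Real.rpow_sub_one hr.ne']
    field_simp
  have key := centralDiff_mul_div_sub_isBigO hf (smooth α)
    (Real.hasDerivAt_rpow_const (Or.inl hr.ne')) ((smooth (α + 1)).div_const (α + 1))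
    volume_deriv (Real.rpow_pos_of_pos hr α).ne'
  simpa only [centralDiff, source_term, ← sub_div] using
    exists_forall_abs_le_of_isBigO_pow (key.mono (nhdsGT_le_nhdsNE 0))

/-- The finite-volume divergence approximation of Method Two and the expanded-form
approximation of Method One differ by `O(h²)`. -/
theorem stmt_0 (α : ℕ) (hα : α = 0 ∨ α = 1 ∨ α = 2) (r : ℝ) (hr : 0 < r)
    (f : ℝ → ℝ) (hf : ContDiffAt ℝ 3 f r) :
    ∃ C > (0:ℝ), ∃ δ > (0:ℝ), ∀ h : ℝ, 0 < h → h < δ →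
      |(f (r + h/2) * (r + h/2) ^ α - f (r - h/2) * (r - h/2) ^ α) /
          (((r + h/2) ^ (α + 1) - (r - h/2) ^ (α + 1)) / ((α : ℝ) + 1))
        - ((f (r + h/2) - f (r - h/2)) / h + (α : ℝ) * f r / r)| ≤ C * h ^ 2 := by
  have hα_ne : (α : ℝ) ≠ -1 := (neg_one_lt_zero.trans_le α.cast_nonneg).ne'
  exact_mod_cast stmt_0_general hα_ne hr (hf.of_le (by norm_num))
end

section
/- Let f : ℝ → ℝ be six times continuously differentiable on a neighborhood of a point x, and let f̂(y; h) = (1/30) f(y − 2h) − (13/60) f(y − h) + (47/60) f(y) + (9/20) f(y + h) − (1/20) f(y + 2h). Then there exist constants C > 0 and δ > 0 such that for all 0 < h < δ, | ( f̂(x; h) − f̂(x − h; h) )/h − f'(x) | ≤ C·h⁵. (The linear combination of the three third-order WENO candidate fluxes with the linear weights γ₁ = 1/10, γ₂ = 3/5, γ₃ = 3/10 yields a fifth-order accurate approximation of the derivative.) -/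
/-!
The increment of the flux over one cell is a six-point finite difference with nodes
`x - 3h, …, x + 2h`. Its weights annihilate the monomials of degree `0, 2, 3, 4, 5` and reproduce
the derivative of the linear one, so by Taylor's formula it equals `h * deriv f x + O(h ^ 6)`;
dividing by `h` costs one order.
-/

open Asymptotics Filter Topology
open scoped Nat

section FiniteDifference

theorem isBigO_sub_taylor_sum_of_contDiffAt {E : Type*} [NormedAddCommGroup E] [NormedSpace ℝ E]
    {f : ℝ → E} {x : ℝ} {n : ℕ} (hf : ContDiffAt ℝ n f x) :
    (fun t => f (x + t) - ∑ k ∈ Finset.range n, (t ^ k / k !) • iteratedDeriv k f x)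
      =O[𝓝 0] fun t => t ^ n := by
  obtain ⟨u, hu, hfu⟩ := hf.contDiffOn (m := n) le_rfl (by simp)
  obtain ⟨r, hr, hru⟩ := Metric.mem_nhds_iff.1 hu
  have remainder_isLittleO := taylor_isLittleO (convex_ball x r) (Metric.mem_ball_self hr)
    (hfu.mono hru)
  rw [Metric.isOpen_ball.nhdsWithin_eq (Metric.mem_ball_self hr)] at remainder_isLittleO
  have tendsto_translate : Tendsto (fun t : ℝ => x + t) (𝓝 0) (𝓝 x) :=
    Continuous.tendsto' (by fun_prop) _ _ (add_zero x)
  have last_term : (fun t : ℝ => (t ^ n / n !) • iteratedDeriv n f x) =O[𝓝 0] fun t => t ^ n := by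
    simpa only [div_eq_inv_mul, smul_eq_mul, mul_one] using
      ((isBigO_refl (fun t : ℝ => t ^ n) (𝓝 0)).const_mul_left (n ! : ℝ)⁻¹).smul
        (isBigO_const_const (iteratedDeriv n f x) (one_ne_zero (α := ℝ)) (𝓝 0))
  refine ((remainder_isLittleO.isBigO.comp_tendsto tendsto_translate).congr_right
    fun t => by simp).add last_term |>.congr_left fun t => ?_
  simp only [Function.comp_apply, taylor_within_apply, add_sub_cancel_left,
    iteratedDerivWithin_of_isOpen Metric.isOpen_ball (Metric.mem_ball_self hr),
    Finset.sum_range_succ, div_eq_inv_mul]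
  abel

variable {ι : Type*} [Fintype ι]

/-- The moment conditions under which `∑ i, w i • f (x + c i * h)` approximates `h ^ m` times the
`m`-th derivative of `f` at `x` to order `h ^ n`: the stencil with weights `w` and nodes `c` is
exact at `0` on the monomials of degree less than `n`. -/
def IsDerivStencil (w c : ι → ℝ) (m n : ℕ) : Prop :=
  ∀ k < n, ∑ i, w i * c i ^ k = if k = m then (m ! : ℝ) else 0

namespace IsDerivStencil

variable {w c : ι → ℝ} {m n : ℕ}

theorem sum_smul_taylor_sum {E : Type*} [AddCommMonoid E] [Module ℝ E]
    (hwc : IsDerivStencil w c m n) (hmn : m < n) (a : ℕ → E) (h : ℝ) :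
    ∑ i, w i • ∑ k ∈ Finset.range n, ((c i * h) ^ k / k !) • a k = h ^ m • a m := by
  calc ∑ i, w i • ∑ k ∈ Finset.range n, ((c i * h) ^ k / k !) • a k
      = ∑ k ∈ Finset.range n, (h ^ k / k ! * ∑ i, w i * c i ^ k) • a k := by
        simp only [Finset.smul_sum, Finset.mul_sum, Finset.sum_smul, smul_smul]
        rw [Finset.sum_comm]
        congr! 3
        ring
    _ = ∑ k ∈ Finset.range n, if k = m then h ^ m • a m else 0 := by
        refine Finset.sum_congr rfl fun k hk => ?_
        rw [hwc k (Finset.mem_range.1 hk)]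
        split_ifs with hkm
        · rw [hkm, div_mul_cancel₀ _ (Nat.cast_ne_zero.2 m.factorial_ne_zero)]
        · rw [mul_zero, zero_smul]
    _ = h ^ m • a m := by
        rw [Finset.sum_ite_eq', if_pos (Finset.mem_range.2 hmn)]

variable {E : Type*} [NormedAddCommGroup E] [NormedSpace ℝ E]

theorem isBigO_sum_sub (hwc : IsDerivStencil w c m n) (hmn : m < n) {f : ℝ → E} {x : ℝ}
    (hf : ContDiffAt ℝ n f x) :
    (fun h => ∑ i, w i • f (x + c i * h) - h ^ m • iteratedDeriv m f x)
      =O[𝓝 0] fun h => h ^ n := by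
  have node_remainder (i : ι) : (fun h => w i • (f (x + c i * h) -
      ∑ k ∈ Finset.range n, ((c i * h) ^ k / k !) • iteratedDeriv k f x))
      =O[𝓝 0] fun h => h ^ n := by
    have tendsto_dilate : Tendsto (fun h => c i * h) (𝓝 0) (𝓝 0) :=
      Continuous.tendsto' (by fun_prop) _ _ (mul_zero _)
    exact (((isBigO_sub_taylor_sum_of_contDiffAt hf).comp_tendsto tendsto_dilate).trans
      ((isBigO_const_mul_self (c i) id (𝓝 0)).pow n)).const_smul_left (w i)
  refine (IsBigO.sum (s := Finset.univ) fun i _ => node_remainder i).congr_left fun h => ?_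
  simp only [Finset.sum_apply, smul_sub, Finset.sum_sub_distrib, hwc.sum_smul_taylor_sum hmn]

theorem isBigO_inv_smul_sum_sub (hwc : IsDerivStencil w c m n) (hmn : m < n) {f : ℝ → E} {x : ℝ}
    (hf : ContDiffAt ℝ n f x) :
    (fun h => (h ^ m)⁻¹ • ∑ i, w i • f (x + c i * h) - iteratedDeriv m f x)
      =O[𝓝[≠] 0] fun h => h ^ (n - m) := by
  refine ((isBigO_refl (fun h : ℝ => (h ^ m)⁻¹) (𝓝[≠] 0)).smul
    ((hwc.isBigO_sum_sub hmn hf).mono nhdsWithin_le_nhds)).congr' ?_ ?_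
  all_goals filter_upwards [self_mem_nhdsWithin] with h (hh : h ≠ 0)
  · rw [smul_sub, inv_smul_smul₀ (pow_ne_zero m hh)]
  · rw [smul_eq_mul, pow_sub₀ h hh hmn.le, mul_comm]

end IsDerivStencil

end FiniteDifference

theorem exists_forall_norm_le_of_isBigO_pow {E : Type*} [Norm E] {g : ℝ → E} {n : ℕ}
    (hg : g =O[𝓝[>] 0] fun h => h ^ n) :
    ∃ C > (0 : ℝ), ∃ δ > (0 : ℝ), ∀ h : ℝ, 0 < h → h < δ → ‖g h‖ ≤ C * h ^ n := by
  obtain ⟨C, hC, hbound⟩ := hg.exists_pos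
  obtain ⟨δ, hδ, hsub⟩ := mem_nhdsGT_iff_exists_Ioo_subset.1 hbound.bound
  refine ⟨C, hC, δ, hδ, fun h h_pos h_lt => ?_⟩
  simpa only [Set.mem_ofPred_eq, norm_pow, Real.norm_of_nonneg h_pos.le] using hsub ⟨h_pos, h_lt⟩

section LinearWeno

variable {E : Type*} [AddCommGroup E] [Module ℝ E]

/-- The fifth-order WENO flux with linear weights at `y + h / 2`, on the grid of spacing `h`
through `y`. -/
noncomputable def linearWenoFlux (f : ℝ → E) (h y : ℝ) : E :=
  (1 / 30 : ℝ) • f (y - 2 * h) - (13 / 60 : ℝ) • f (y - h) + (47 / 60 : ℝ) • f y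
    + (9 / 20 : ℝ) • f (y + h) - (1 / 20 : ℝ) • f (y + 2 * h)

/-- The weights of the six-point finite difference given by the increment of `linearWenoFlux`
over one cell. -/
noncomputable def linearWenoWeight : Fin 6 → ℝ :=
  ![-1 / 30, 1 / 4, -1, 1 / 3, 1 / 2, -1 / 20]

/-- The nodes of the increment of `linearWenoFlux` over one cell, in units of the grid spacing
and relative to the point where the derivative is approximated. -/
def linearWenoNode : Fin 6 → ℝ :=
  ![-3, -2, -1, 0, 1, 2]

theorem linearWenoFlux_sub_eq_sum (f : ℝ → E) (h x : ℝ) :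
    linearWenoFlux f h x - linearWenoFlux f h (x - h) =
      ∑ i, linearWenoWeight i • f (x + linearWenoNode i * h) := by
  have expand_sum : ∑ i, linearWenoWeight i • f (x + linearWenoNode i * h) =
      (-1 / 30 : ℝ) • f (x + -3 * h) + (1 / 4 : ℝ) • f (x + -2 * h) + (-1 : ℝ) • f (x + -1 * h)
        + (1 / 3 : ℝ) • f (x + 0 * h) + (1 / 2 : ℝ) • f (x + 1 * h)
        + (-1 / 20 : ℝ) • f (x + 2 * h) :=
    Fin.sum_univ_six _
  rw [expand_sum, linearWenoFlux, linearWenoFlux]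
  ring_nf
  module

theorem isDerivStencil_linearWeno : IsDerivStencil linearWenoWeight linearWenoNode 1 6 := by
  intro k hk
  interval_cases k <;> norm_num [linearWenoWeight, linearWenoNode, Fin.sum_univ_succ]

end LinearWeno

theorem stmt_8_general {E : Type*} [NormedAddCommGroup E] [NormedSpace ℝ E] {f : ℝ → E} {x : ℝ}
    (hf : ContDiffAt ℝ 6 f x) :
    (fun h => h⁻¹ • (linearWenoFlux f h x - linearWenoFlux f h (x - h)) - deriv f x)
      =O[𝓝[≠] 0] fun h => h ^ 5 := by
  simpa only [linearWenoFlux_sub_eq_sum, pow_one, iteratedDeriv_one] using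
    isDerivStencil_linearWeno.isBigO_inv_smul_sum_sub (by norm_num) hf

/-- The convex combination of the three third-order WENO candidate fluxes with the
linear weights `γ₁ = 1/10, γ₂ = 3/5, γ₃ = 3/10` yields a fifth-order accurate
approximation of the derivative. -/
theorem stmt_8 (f : ℝ → ℝ) (x : ℝ) (hf : ContDiffAt ℝ 6 f x) :
    ∃ C > (0:ℝ), ∃ δ > (0:ℝ), ∀ h : ℝ, 0 < h → h < δ →
      let fhat : ℝ → ℝ := fun y =>
        (1/30) * f (y - 2*h) - (13/60) * f (y - h) + (47/60) * f y
          + (9/20) * f (y + h) - (1/20) * f (y + 2*h)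
      |(fhat x - fhat (x - h)) / h - deriv f x| ≤ C * h ^ 5 := by
  simpa only [linearWenoFlux, smul_eq_mul, ← div_eq_inv_mul, Real.norm_eq_abs] using
    exists_forall_norm_le_of_isBigO_pow ((stmt_8_general hf).mono (nhdsGT_le_nhdsNE 0))
end
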